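/- arXiv:1107.5339 — 2 statements merged into one kernel-verified Lean document; each statement's English description precedes it below -/
import Mathlib

section
/- Let F be the presented group with generators a, b, c, d and relators a², b², c², d², bcd. Let K be the subgroup of F generated by b, c, d and let A be the subgroup generated by a. For every group homomorphism ω : K → A, there exists a unique group homomorphism φ_ω : F → F ≀ 2 such that φ_ω(a) = ⟨1, 1⟩σ (σ the transposition of the two coordinates) and φ_ω(x) = ⟨ω(x), x⟩ with trivial permutation part for each x ∈ {b, c, d}. -/
/-- The natural action of `Equiv.Perm (Fin d)` on `Fin d → G`, `(σ • f) i = f (σ⁻¹ i)`. -/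
def permAut (G : Type*) [Group G] (d : ℕ) :
    Equiv.Perm (Fin d) →* MulAut (Fin d → G) where
  toFun σ :=
    { toFun := fun f i => f (σ⁻¹ i)
      invFun := fun f i => f (σ i)
      left_inv := fun f => funext fun i => by simp
      right_inv := fun f => funext fun i => by simp
      map_mul' := fun f g => rfl }
  map_one' := by
    ext f i
    simp
  map_mul' := fun σ τ => by
    ext f i
    simp [mul_inv_rev]

/-- The permutational wreath product `G ≀ d = (Fin d → G) ⋊ Equiv.Perm (Fin d)`. -/
abbrev Wr (G : Type*) [Group G] (d : ℕ) :=
  (Fin d → G) ⋊[permAut G d] Equiv.Perm (Fin d)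

/-- The four generators `a, b, c, d` of the Grigorchuk cover. -/
inductive GrigGen : Type
  | a | b | c | d
  deriving DecidableEq

open GrigGen in
/-- The relators `a², b², c², d², bcd`. -/
def grigRels : Set (FreeGroup GrigGen) :=
  {FreeGroup.of a ^ 2, FreeGroup.of b ^ 2, FreeGroup.of c ^ 2, FreeGroup.of d ^ 2,
    FreeGroup.of b * FreeGroup.of c * FreeGroup.of d}

/-- The presented group `F = ⟨a,b,c,d ∣ a², b², c², d², bcd⟩ ≅ C₂ * (C₂ × C₂)`. -/
abbrev GrigF : Type := PresentedGroup grigRels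


open GrigGen

/-- The subgroup `K = ⟨b, c, d⟩` of `F`. -/
def GrigK : Subgroup GrigF :=
  Subgroup.closure {PresentedGroup.of b, PresentedGroup.of c, PresentedGroup.of d}

/-- The subgroup `A = ⟨a⟩` of `F`. -/
def GrigA : Subgroup GrigF :=
  Subgroup.closure {PresentedGroup.of a}

/-!
`F` is the free product of `⟨a⟩ ≅ C₂` and `K`: a homomorphism `F →* H` amounts to an element of `H`
with trivial square, the image of `a`, together with a homomorphism `K →* H`. In `F ≀ 2` the swap of
the coordinates squares to one, and `k ↦ ⟨ω k, k⟩` is a homomorphism from `K` into the base group.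
-/

namespace GrigF

theorem of_sq (x : GrigGen) : (PresentedGroup.of x : GrigF) ^ 2 = 1 := by
  have hx : FreeGroup.of x ^ 2 ∈ grigRels := by cases x <;> simp [grigRels]
  exact PresentedGroup.one_of_mem hx

theorem of_b_mul_of_c_mul_of_d :
    (PresentedGroup.of b * PresentedGroup.of c * PresentedGroup.of d : GrigF) = 1 := by
  have hbcd : FreeGroup.of b * FreeGroup.of c * FreeGroup.of d ∈ grigRels := by simp [grigRels]
  exact PresentedGroup.one_of_mem hbcd

theorem of_mem_GrigK {x : GrigGen} (hx : x ≠ a) : (PresentedGroup.of x : GrigF) ∈ GrigK :=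
  Subgroup.subset_closure (by cases x <;> simp_all)

section Lift

variable {H : Type*} [Group H]

/-- The images of the generators of `F` under the homomorphism that sends `a` to `t` and restricts
to `ψ` on `K`. -/
def liftGen (t : H) (ψ : GrigK →* H) (x : GrigGen) : H :=
  if hx : x = a then t else ψ ⟨PresentedGroup.of x, of_mem_GrigK hx⟩

variable {t : H} (ψ : GrigK →* H)

theorem liftGen_of_ne_a {x : GrigGen} (hx : x ≠ a) :
    liftGen t ψ x = ψ ⟨PresentedGroup.of x, of_mem_GrigK hx⟩ :=
  dif_neg hx

theorem liftGen_sq (ht : t ^ 2 = 1) (x : GrigGen) : liftGen t ψ x ^ 2 = 1 := by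
  by_cases hx : x = a
  · rwa [liftGen, dif_pos hx]
  · have hsq : (⟨PresentedGroup.of x, of_mem_GrigK hx⟩ : GrigK) ^ 2 = 1 := Subtype.ext (of_sq x)
    rw [liftGen_of_ne_a ψ hx, ← map_pow, hsq, map_one]

theorem liftGen_b_mul_c_mul_d : liftGen t ψ b * liftGen t ψ c * liftGen t ψ d = 1 := by
  have hb : b ≠ a := by decide
  have hc : c ≠ a := by decide
  have hd : d ≠ a := by decide
  have hbcd : (⟨PresentedGroup.of b, of_mem_GrigK hb⟩ * ⟨PresentedGroup.of c, of_mem_GrigK hc⟩ *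
      ⟨PresentedGroup.of d, of_mem_GrigK hd⟩ : GrigK) = 1 := Subtype.ext of_b_mul_of_c_mul_of_d
  rw [liftGen_of_ne_a ψ hb, liftGen_of_ne_a ψ hc, liftGen_of_ne_a ψ hd, ← map_mul, ← map_mul,
    hbcd, map_one]

theorem freeGroup_lift_liftGen_eq_one (ht : t ^ 2 = 1) :
    ∀ r ∈ grigRels, FreeGroup.lift (liftGen t ψ) r = 1 := by
  rintro r (rfl | rfl | rfl | rfl | rfl)
  all_goals simp only [map_pow, map_mul, FreeGroup.lift_apply_of]
  · exact liftGen_sq ψ ht a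
  · exact liftGen_sq ψ ht b
  · exact liftGen_sq ψ ht c
  · exact liftGen_sq ψ ht d
  · exact liftGen_b_mul_c_mul_d ψ

/-- The homomorphism out of `F` that sends `a` to `t` and restricts to `ψ` on `K`; this is the
universal property of the free product `F = ⟨a⟩ * K`. -/
def lift (ht : t ^ 2 = 1) : GrigF →* H :=
  PresentedGroup.toGroup (freeGroup_lift_liftGen_eq_one ψ ht)

theorem lift_of_a (ht : t ^ 2 = 1) : lift ψ ht (PresentedGroup.of a) = t :=
  PresentedGroup.toGroup.of _

theorem lift_of_ne_a (ht : t ^ 2 = 1) {x : GrigGen} (hx : x ≠ a) :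
    lift ψ ht (PresentedGroup.of x) = ψ ⟨PresentedGroup.of x, of_mem_GrigK hx⟩ :=
  (PresentedGroup.toGroup.of _).trans (liftGen_of_ne_a ψ hx)

end Lift

end GrigF

namespace Wr

variable {G : Type*} [Group G]

theorem mk_one_one_swap_sq :
    (SemidirectProduct.mk ![1, 1] (Equiv.swap 0 1) : Wr G 2) ^ 2 = 1 := by
  have hinr : (SemidirectProduct.mk ![1, 1] (Equiv.swap 0 1) : Wr G 2) =
      SemidirectProduct.inr (Equiv.swap 0 1) :=
    SemidirectProduct.ext (by ext i; fin_cases i <;> rfl) rfl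
  rw [hinr, ← map_pow, sq, Equiv.swap_mul_self, map_one]

/-- The homomorphism `k ↦ ⟨ω k, η k⟩` into the base group of `G ≀ 2`. -/
def basePairHom {N : Type*} [MulOneClass N] (ω η : N →* G) : N →* Wr G 2 :=
  SemidirectProduct.inl.comp (MonoidHom.pi ![ω, η])

theorem basePairHom_apply {N : Type*} [MulOneClass N] (ω η : N →* G) (k : N) :
    basePairHom ω η k = SemidirectProduct.mk ![ω k, η k] 1 :=
  SemidirectProduct.ext (by ext i; fin_cases i <;> rfl) rfl

end Wr

theorem generalized_grigorchuk_similarity_exists_unique_general {G : Type*} [Group G]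
    (ω η : GrigK →* G) :
    ∃! φ : GrigF →* Wr G 2,
      φ (PresentedGroup.of a) = SemidirectProduct.mk ![1, 1] (Equiv.swap 0 1) ∧
      φ (PresentedGroup.of b) =
        SemidirectProduct.mk
          ![ω ⟨PresentedGroup.of b, GrigF.of_mem_GrigK (by decide)⟩,
            η ⟨PresentedGroup.of b, GrigF.of_mem_GrigK (by decide)⟩] 1 ∧
      φ (PresentedGroup.of c) =
        SemidirectProduct.mk
          ![ω ⟨PresentedGroup.of c, GrigF.of_mem_GrigK (by decide)⟩,
            η ⟨PresentedGroup.of c, GrigF.of_mem_GrigK (by decide)⟩] 1 ∧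
      φ (PresentedGroup.of d) =
        SemidirectProduct.mk
          ![ω ⟨PresentedGroup.of d, GrigF.of_mem_GrigK (by decide)⟩,
            η ⟨PresentedGroup.of d, GrigF.of_mem_GrigK (by decide)⟩] 1 := by
  simp only [← Wr.basePairHom_apply]
  refine ⟨GrigF.lift (Wr.basePairHom ω η) Wr.mk_one_one_swap_sq,
    ⟨GrigF.lift_of_a _ _, GrigF.lift_of_ne_a _ _ (by decide),
      GrigF.lift_of_ne_a _ _ (by decide), GrigF.lift_of_ne_a _ _ (by decide)⟩, ?_⟩
  rintro χ ⟨ha, hb, hc, hd⟩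
  refine PresentedGroup.ext fun x => ?_
  cases x with
  | a => exact ha.trans (GrigF.lift_of_a _ _).symm
  | b => exact hb.trans (GrigF.lift_of_ne_a _ _ (by decide)).symm
  | c => exact hc.trans (GrigF.lift_of_ne_a _ _ (by decide)).symm
  | d => exact hd.trans (GrigF.lift_of_ne_a _ _ (by decide)).symm

/-- For every homomorphism `ω : K → A` there is a unique homomorphism
`φ_ω : F → F ≀ 2` with `φ_ω(a) = ⟨1,1⟩(1,2)` and `φ_ω(x) = ⟨ω(x), x⟩` for
`x ∈ {b, c, d}`: the similarity structures of the generalized Grigorchuk groups. -/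
theorem generalized_grigorchuk_similarity_exists_unique (ω : GrigK →* GrigA) :
    ∃! φω : GrigF →* Wr GrigF 2,
      φω (PresentedGroup.of a) =
        SemidirectProduct.mk ![1, 1] (Equiv.swap 0 1) ∧
      φω (PresentedGroup.of b) =
        SemidirectProduct.mk
          ![(ω ⟨PresentedGroup.of b, Subgroup.subset_closure (by simp)⟩ : GrigF),
            PresentedGroup.of b] 1 ∧
      φω (PresentedGroup.of c) =
        SemidirectProduct.mk
          ![(ω ⟨PresentedGroup.of c, Subgroup.subset_closure (by simp)⟩ : GrigF),
            PresentedGroup.of c] 1 ∧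
      φω (PresentedGroup.of d) =
        SemidirectProduct.mk
          ![(ω ⟨PresentedGroup.of d, Subgroup.subset_closure (by simp)⟩ : GrigF),
            PresentedGroup.of d] 1 :=
  generalized_grigorchuk_similarity_exists_unique_general (GrigA.subtype.comp ω) GrigK.subtype
end

section
/- Fix d ≥ 2 and e ≥ 0. Define groups Σ₋₁ = Equiv.Perm (Fin d) and, recursively for 0 ≤ i ≤ e, Σ_i = (Fin (d−1) → Σ_{i−1}) ⋊ Equiv.Perm (Fin (d−1)) (the permutational wreath product of Σ_{i−1} with Equiv.Perm (Fin (d−1))). Let F = Σ₋₁ * Σ₀ * ⋯ * Σ_e be the free product. Then there exists a unique group homomorphism φ : F → F ≀ d such that: for σ ∈ Σ₋₁, φ(σ) = ⟨1, …, 1⟩σ; and for 0 ≤ i ≤ e and g = ⟨f₁, …, f_{d−1}⟩τ ∈ Σ_i (with f_j ∈ Σ_{i−1} and τ ∈ Equiv.Perm (Fin (d−1))), φ(g) = ⟨f₁, …, f_{d−1}, g⟩τ̂, where the j-th entry for j < d is f_j ∈ Σ_{i−1} ⊆ F, the last entry is g ∈ Σ_i ⊆ F, and τ̂ ∈ Equiv.Perm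 (Fin d) is τ extended by fixing the last point. -/
/-- The groups `Σ₋₁ = Equiv.Perm (Fin (m+1))` and `Σ_i = (Fin m → Σ_{i-1}) ⋊ Equiv.Perm (Fin m)`
(with `d = m + 1`), bundled with their group structures; `SigG m i` is the paper's `Σ_{i-1}`. -/
def SigG (m : ℕ) : ℕ → ((T : Type) × Group T)
  | 0 => ⟨Equiv.Perm (Fin (m+1)), inferInstance⟩
  | i+1 =>
    letI := (SigG m i).2
    ⟨Wr (SigG m i).1 m, inferInstance⟩

/-- The underlying type of `Σ_{i-1}`. -/
abbrev Sig (m i : ℕ) : Type := (SigG m i).1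

instance sigGroup (m i : ℕ) : Group (Sig m i) := (SigG m i).2

/-- The free product `F = Σ₋₁ * Σ₀ * ⋯ * Σ_e`. -/
abbrev PolF (m e : ℕ) : Type := Monoid.CoprodI (fun j : Fin (e+2) => Sig m j)

/-- The extension `τ ↦ τ̂` of a permutation of the first `m` points of `Fin (m + 1)` that fixes the
last point. -/
noncomputable def permFixLast (m : ℕ) : Equiv.Perm (Fin m) →* Equiv.Perm (Fin (m + 1)) :=
  Equiv.Perm.viaEmbeddingHom Fin.castSuccEmb

@[simp]
theorem permFixLast_castSucc {m : ℕ} (τ : Equiv.Perm (Fin m)) (j : Fin m) :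
    permFixLast m τ j.castSucc = (τ j).castSucc :=
  Equiv.Perm.viaEmbedding_apply τ Fin.castSuccEmb j

@[simp]
theorem permFixLast_last {m : ℕ} (τ : Equiv.Perm (Fin m)) :
    permFixLast m τ (Fin.last m) = Fin.last m :=
  Equiv.Perm.viaEmbedding_apply_of_notMem τ Fin.castSuccEmb _ <| by simp

theorem eq_permFixLast_iff {m : ℕ} {σ : Equiv.Perm (Fin (m + 1))} {τ : Equiv.Perm (Fin m)} :
    σ = permFixLast m τ ↔
      (∀ j : Fin m, σ j.castSucc = (τ j).castSucc) ∧ σ (Fin.last m) = Fin.last m := by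
  simp [Equiv.ext_iff, Fin.forall_fin_succ']

theorem permAut_apply {G : Type*} [Group G] {d : ℕ} (σ : Equiv.Perm (Fin d)) (f : Fin d → G)
    (i : Fin d) : permAut G d σ f i = f (σ⁻¹ i) :=
  rfl

theorem permAut_permFixLast_snoc {G : Type*} [Group G] {m : ℕ} (τ : Equiv.Perm (Fin m))
    (f : Fin m → G) (x : G) :
    permAut G (m + 1) (permFixLast m τ) (Fin.snoc f x : Fin (m + 1) → G) =
      (Fin.snoc (permAut G m τ f) x : Fin (m + 1) → G) := by
  ext j
  rw [permAut_apply, ← map_inv]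
  induction j using Fin.lastCases with
  | last => simp only [permFixLast_last, Fin.snoc_last]
  | cast j => simp only [permFixLast_castSucc, Fin.snoc_castSucc, permAut_apply]

namespace Wr

variable {G H : Type*} [Group G] [Group H] {m : ℕ}

/-- Functoriality of the wreath product in its base group:
`⟨g₁,…,g_d⟩σ ↦ ⟨α g₁,…,α g_d⟩σ`. -/
def map (α : G →* H) (d : ℕ) : Wr G d →* Wr H d :=
  SemidirectProduct.map (α.compLeft (Fin d)) (MonoidHom.id _) fun _ => rfl

/-- The homomorphism `(⟨g₁,…,g_m⟩τ, x) ↦ ⟨g₁,…,g_m,x⟩τ̂`. It is multiplicative because `τ̂` fixes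
the last point, so that the last entries of two factors are multiplied with each other. -/
noncomputable def snocHom (G : Type*) [Group G] (m : ℕ) : Wr G m × G →* Wr G (m + 1) where
  toFun p := ⟨Fin.snoc p.1.left p.2, permFixLast m p.1.right⟩
  map_one' := by
    ext j
    · induction j using Fin.lastCases <;> simp
    · simp
  map_mul' p q := by
    apply SemidirectProduct.ext
    · rw [SemidirectProduct.mul_left, permAut_permFixLast_snoc]
      ext j
      induction j using Fin.lastCases <;> simp
    · simp

theorem eq_snocHom_iff {w : Wr G (m + 1)} {v : Wr G m} {x : G} :
    w = snocHom G m (v, x) ↔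
      (∀ j : Fin m, w.left j.castSucc = v.left j) ∧ w.left (Fin.last m) = x ∧
      (∀ j : Fin m, w.right j.castSucc = (v.right j).castSucc) ∧
      w.right (Fin.last m) = Fin.last m := by
  rw [SemidirectProduct.ext_iff, ← and_assoc]
  exact and_congr (by simp [snocHom, funext_iff, Fin.forall_fin_succ']) eq_permFixLast_iff

end Wr

theorem existsUnique_coprodI_hom_extending {ι : Type*} {M : ι → Type*} [∀ i, Monoid (M i)]
    {N : Type*} [Monoid N] (f : ∀ i, M i →* N) :
    ∃! φ : Monoid.CoprodI M →* N, ∀ i (x : M i), φ (Monoid.CoprodI.of x) = f i x := by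
  refine ⟨Monoid.CoprodI.lift f, fun i x => Monoid.CoprodI.lift_of f x, fun ψ hψ => ?_⟩
  refine Monoid.CoprodI.ext_hom _ _ fun i => MonoidHom.ext fun x => ?_
  simp [hψ]

section Recursion

variable {G : Type*} [Group G] {m n : ℕ}

/-- The wreath recursion `σ ↦ ⟨1,…,1⟩σ`, `g = ⟨f₁,…,f_m⟩τ ↦ ⟨f₁,…,f_m,g⟩τ̂` on the groups
`Σ₋₁, …, Σ_{n-2}`, with entries in any group `G` to which these are mapped by homomorphisms `α j`;
the index `j` stands for the paper's `j - 1`, as in `SigG`. -/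
noncomputable def sigRecursion (α : ∀ j : Fin n, Sig m j →* G) :
    ∀ j : Fin n, Sig m j →* Wr G (m + 1)
  | ⟨0, _⟩ => (SemidirectProduct.inr : Equiv.Perm (Fin (m + 1)) →* Wr G (m + 1))
  | ⟨i + 1, hi⟩ =>
    (Wr.snocHom G m).comp ((Wr.map (α ⟨i, by omega⟩) m).prod (α ⟨i + 1, hi⟩))

theorem eq_sigRecursion_zero_iff (α : ∀ j : Fin n, Sig m j →* G) (hn : 0 < n)
    {w : Wr G (m + 1)} {σ : Sig m 0} :
    w = sigRecursion α ⟨0, hn⟩ σ ↔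
      (w.left = fun _ => 1) ∧ w.right = (σ : Equiv.Perm (Fin (m + 1))) :=
  SemidirectProduct.ext_iff

theorem eq_sigRecursion_succ_iff (α : ∀ j : Fin n, Sig m j →* G) {i : ℕ} (hi : i + 1 < n)
    {w : Wr G (m + 1)} {g : Sig m (i + 1)} :
    w = sigRecursion α ⟨i + 1, hi⟩ g ↔
      (∀ j : Fin m, w.left j.castSucc = α ⟨i, by omega⟩ ((show Wr (Sig m i) m from g).left j)) ∧
      w.left (Fin.last m) = α ⟨i + 1, hi⟩ g ∧
      (∀ j : Fin m, w.right j.castSucc = ((show Wr (Sig m i) m from g).right j).castSucc) ∧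
      w.right (Fin.last m) = Fin.last m :=
  Wr.eq_snocHom_iff

end Recursion

/-- The self-similarity structure of the group `P(d, e)` of polynomial activity growth,
`d = m + 1 ≥ 2`: there is a unique homomorphism `φ : F → F ≀ d`,
`F = Σ₋₁ * Σ₀ * ⋯ * Σ_e`, such that `φ(σ) = ⟨1,…,1⟩σ` for `σ ∈ Σ₋₁` and
`φ(g) = ⟨f₁,…,f_{d-1},g⟩τ̂` for `g = ⟨f₁,…,f_{d-1}⟩τ ∈ Σ_i`, `0 ≤ i ≤ e`, where `τ̂`
is `τ` extended by fixing the last point. -/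
theorem polynomial_activity_selfsimilarity_exists_unique
    (m e : ℕ) (hm : 1 ≤ m) :
    ∃! φ : PolF m e →* Wr (PolF m e) (m+1),
      (∀ σ : Sig m 0,
        ((φ (Monoid.CoprodI.of (i := (⟨0, by omega⟩ : Fin (e+2))) σ)).left = fun _ => 1) ∧
        (φ (Monoid.CoprodI.of (i := (⟨0, by omega⟩ : Fin (e+2))) σ)).right =
          (σ : Equiv.Perm (Fin (m+1)))) ∧
      (∀ (i : ℕ) (hi : i ≤ e) (g : Sig m (i+1)),
        (∀ j : Fin m,
          (φ (Monoid.CoprodI.of (i := (⟨i+1, by omega⟩ : Fin (e+2))) g)).left j.castSucc =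
            Monoid.CoprodI.of (i := (⟨i, by omega⟩ : Fin (e+2)))
              ((show Wr (Sig m i) m from g).left j)) ∧
        ((φ (Monoid.CoprodI.of (i := (⟨i+1, by omega⟩ : Fin (e+2))) g)).left (Fin.last m) =
          Monoid.CoprodI.of (i := (⟨i+1, by omega⟩ : Fin (e+2))) g) ∧
        (∀ j : Fin m,
          (φ (Monoid.CoprodI.of (i := (⟨i+1, by omega⟩ : Fin (e+2))) g)).right j.castSucc =
            ((show Wr (Sig m i) m from g).right j).castSucc) ∧
        ((φ (Monoid.CoprodI.of (i := (⟨i+1, by omega⟩ : Fin (e+2))) g)).right (Fin.last m) =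
          Fin.last m)) := by
  let ι (j : Fin (e+2)) : Sig m j →* PolF m e :=
    Monoid.CoprodI.of (M := fun j : Fin (e+2) => Sig m j)
  refine (existsUnique_congr fun φ => ?_).mpr
    (existsUnique_coprodI_hom_extending (sigRecursion ι))
  rw [Fin.forall_fin_succ, Fin.forall_iff]
  refine and_congr (forall_congr' fun σ => (eq_sigRecursion_zero_iff ι _).symm) ?_
  refine forall_congr' fun i => ⟨fun h hi g => ?_, fun h hi g => ?_⟩
  · exact (eq_sigRecursion_succ_iff ι _).mpr (h (Nat.lt_succ_iff.mp hi) g)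
  · exact (eq_sigRecursion_succ_iff ι _).mp (h (Nat.lt_succ_iff.mpr hi) g)
end
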